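/- arXiv:2512.21192 — 9 statements merged into one kernel-verified Lean document; each statement's English description precedes it below -/
import Mathlib

section
/- Let α* : ℕ → [0,1] be given by α*(k) := k(ū−c)^k / ((k−1)(ū−c)^k + ū^k) for k ≥ 1. Then: (i) for every strategy α : ℕ → [0,1] and every integer n ≥ 1, Reg(n, α, p̂) = R_n* where R_n* := (1 − ((ū−c)/ū)^n)(ū−c); and (ii) for every integer n ≥ 1 and every p ∈ [0,1], Reg(n, α*, p) ≤ R_n*. Consequently (α*, p̂) is a saddle point of the n-box regret problem with independently and identically distributed binary rewards, and the minimax regret equals R_n*. -/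
/-- `n`-box Pandora problem with i.i.d. binary rewards and ex-post regret
`Reg(n, α, p)` defined recursively by `Reg(0,α,p) = 0` and
`Reg(n,α,p) = (1-α(n))(1-(1-p)^n)(ū-c) + α(n)(1-p)(c + Reg(n-1,α,p))`.
With `p̂ = c/ū` and `α*(k) = k(ū-c)^k/((k-1)(ū-c)^k + ū^k)`:
(i) `Reg(n, α, p̂) = R_n* := (1-((ū-c)/ū)^n)(ū-c)` for every strategy `α` and
every `n ≥ 1`; (ii) `Reg(n, α*, p) ≤ R_n*` for every `n ≥ 1` and `p ∈ [0,1]`.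
So `(α*, p̂)` is a saddle point with minimax regret `R_n*`. -/
theorem indep_binary_saddle_point (ubar c : ℝ) (hc : 0 < c) (hcu : c < ubar)
    (Reg : ℕ → (ℕ → ℝ) → ℝ → ℝ)
    (hReg0 : ∀ (α : ℕ → ℝ) (p : ℝ), Reg 0 α p = 0)
    (hRegS : ∀ (n : ℕ) (α : ℕ → ℝ) (p : ℝ),
      Reg (n + 1) α p =
        (1 - α (n + 1)) * (1 - (1 - p) ^ (n + 1)) * (ubar - c)
          + α (n + 1) * (1 - p) * (c + Reg n α p))
    (αstar : ℕ → ℝ)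
    (hαstar : ∀ k : ℕ, 1 ≤ k →
      αstar k = (k : ℝ) * (ubar - c) ^ k / (((k : ℝ) - 1) * (ubar - c) ^ k + ubar ^ k)) :
    (∀ α : ℕ → ℝ, (∀ k, α k ∈ Set.Icc (0:ℝ) 1) → ∀ n : ℕ, 1 ≤ n →
      Reg n α (c / ubar) = (1 - ((ubar - c) / ubar) ^ n) * (ubar - c)) ∧
    (∀ n : ℕ, 1 ≤ n → ∀ p ∈ Set.Icc (0:ℝ) 1,
      Reg n αstar p ≤ (1 - ((ubar - c) / ubar) ^ n) * (ubar - c)) := by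
  have hu : 0 < ubar := hc.trans hcu
  obtain ⟨r, hr⟩ : ∃ r, r = (ubar - c) / ubar := ⟨_, rfl⟩
  have hr0 : 0 < r := by rw [hr]; exact div_pos (by linarith) hu
  have hr1 : r < 1 := by rw [hr, div_lt_one hu]; linarith
  have hv : ubar - c = r * ubar := by rw [hr]; field_simp
  have hcr : c = (1 - r) * ubar := by linarith
  have hp : 1 - c / ubar = r := by rw [hr]; field_simp
  rw [← hr]
  constructor
  · intro α _ n _
    induction n with
    | zero => rw [hReg0]; simp
    | succ n ih =>
      have ih' : Reg n α (c / ubar) = (1 - r ^ n) * (ubar - c) := by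
        rcases Nat.eq_zero_or_pos n with h | h
        · subst h; rw [hReg0]; simp
        · exact ih h
      rw [hRegS, ih', hp, hv]
      nth_rewrite 1 [hcr]
      ring
  · intro n _ p hp01
    obtain ⟨q, hq⟩ : ∃ q, q = 1 - p := ⟨_, rfl⟩
    have hq0 : 0 ≤ q := by linarith [hp01.2]
    have key : Reg n αstar p ≤ (1 - r ^ n) * (ubar - c) := by
      clear * - hReg0 hRegS hαstar hu hr0 hr1 hv hcr hq hq0
      induction n with
      | zero => rw [hReg0]; simp
      | succ n ih =>
        have hrn : 0 < r ^ (n + 1) := pow_pos hr0 _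
        have hrn1 : r ^ (n + 1) < 1 := pow_lt_one₀ hr0.le hr1 (by omega)
        have hD : 0 < (n : ℝ) * r ^ (n + 1) + 1 := by positivity
        have ha : αstar (n + 1) = ((n : ℝ) + 1) * r ^ (n + 1) / ((n : ℝ) * r ^ (n + 1) + 1) := by
          rw [hαstar (n + 1) (by omega), hv, mul_pow]
          have hun : 0 < ubar ^ (n + 1) := pow_pos hu _
          push_cast
          rw [div_eq_div_iff (by rw [add_sub_cancel_right]; positivity) hD.ne']
          ring
        have hb : ((n : ℝ) + 1) * r ^ (n + 1) * (q - r) ≤ r * (q ^ (n + 1) - r ^ (n + 1)) := by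
          have h := one_add_mul_sub_le_pow (a := q / r)
            (by have := div_nonneg hq0 hr0.le; linarith) (n + 1)
          have h2 := mul_le_mul_of_nonneg_left h (mul_pos hr0 hrn).le
          rw [div_pow] at h2
          push_cast at h2
          have e1 : r * r ^ (n + 1) * (q ^ (n + 1) / r ^ (n + 1)) = r * q ^ (n + 1) := by
            field_simp
          have e2 : r * r ^ (n + 1) * (1 + ((n : ℝ) + 1) * (q / r - 1))
              = r * r ^ (n + 1) + ((n : ℝ) + 1) * r ^ (n + 1) * (q - r) := by
            field_simp
          rw [e1, e2] at h2
          linarith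
        obtain ⟨a, hae⟩ : ∃ a, a = αstar (n + 1) := ⟨_, rfl⟩
        have ha0 : 0 ≤ a := by rw [hae, ha]; positivity
        have haD : a * ((n : ℝ) * r ^ (n + 1) + 1) = ((n : ℝ) + 1) * r ^ (n + 1) := by
          rw [hae, ha]; field_simp
        rw [hRegS, ← hae, ← hq]
        have h1 : a * q * (c + Reg n αstar p) ≤ a * q * (c + (1 - r ^ n) * (ubar - c)) :=
          mul_le_mul_of_nonneg_left (by linarith) (mul_nonneg ha0 hq0)
        have h2 : (1 - a) * (1 - q ^ (n + 1)) * (ubar - c)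
            + a * q * (c + (1 - r ^ n) * (ubar - c)) - (1 - r ^ (n + 1)) * (ubar - c)
            = ubar * ((1 - a) * (r * (r ^ (n + 1) - q ^ (n + 1)))
              + a * (q - r) * (1 - r ^ (n + 1))) := by
          rw [hv]
          nth_rewrite 1 [hcr]
          ring
        have h3 : (1 - a) * (r * (r ^ (n + 1) - q ^ (n + 1)))
              + a * (q - r) * (1 - r ^ (n + 1)) ≤ 0 := by
          refine nonpos_of_mul_nonpos_left (b := (n : ℝ) * r ^ (n + 1) + 1) ?_ hD
          have e : ((1 - a) * (r * (r ^ (n + 1) - q ^ (n + 1)))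
              + a * (q - r) * (1 - r ^ (n + 1))) * ((n : ℝ) * r ^ (n + 1) + 1)
              = (1 - r ^ (n + 1)) * (((n : ℝ) + 1) * r ^ (n + 1) * (q - r)
                - r * (q ^ (n + 1) - r ^ (n + 1))) := by
            linear_combination ((q - r) * (1 - r ^ (n + 1))
              - r * (r ^ (n + 1) - q ^ (n + 1))) * haD
          rw [e]
          exact mul_nonpos_of_nonneg_of_nonpos (by linarith) (by linarith)
        have h4 := mul_nonpos_of_nonneg_of_nonpos hu.le h3
        linarith
    exact key
end

section
/- The sequence α_n* := n(ū−c)^n / ((n−1)(ū−c)^n + ū^n), defined for integers n ≥ 1, is strictly decreasing in n and converges to 0 as n → ∞. -/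
lemma alpha_key (a b : ℝ) (ha : 0 < a) (hab : a < b) (n : ℕ) (hn : 1 ≤ n) :
    ((n : ℝ) + 1) * a * b ^ n < a * a ^ n + n * (b * b ^ n) := by
  induction n, hn using Nat.le_induction with
  | base => norm_num; nlinarith [mul_pos (sub_pos.2 hab) (sub_pos.2 hab)]
  | succ n hn ih =>
    have h1 := mul_lt_mul_of_pos_left ih ha
    have hB : 0 < b ^ n := pow_pos (ha.trans hab) n
    have h2 : 0 ≤ ((n : ℝ) + 1) * (a - b) ^ 2 * b ^ n := by positivity
    push_cast
    rw [pow_succ, pow_succ]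
    nlinarith

lemma alpha_den_pos (a b : ℝ) (ha : 0 < a) (hab : a < b) (n : ℕ) (hn : 1 ≤ n) :
    0 < ((n : ℝ) - 1) * a ^ n + b ^ n := by
  have h : (0 : ℝ) ≤ (n : ℝ) - 1 := by
    have : (1 : ℝ) ≤ n := by exact_mod_cast hn
    linarith
  have hB : 0 < b ^ n := pow_pos (ha.trans hab) n
  positivity

lemma alpha_step (a b : ℝ) (ha : 0 < a) (hab : a < b) (n : ℕ) (hn : 1 ≤ n) :
    ((n + 1 : ℕ) : ℝ) * a ^ (n + 1) / ((((n + 1 : ℕ) : ℝ) - 1) * a ^ (n + 1) + b ^ (n + 1))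
      < (n : ℝ) * a ^ n / (((n : ℝ) - 1) * a ^ n + b ^ n) := by
  rw [div_lt_div_iff₀ (alpha_den_pos a b ha hab _ (by omega)) (alpha_den_pos a b ha hab n hn)]
  have h := mul_lt_mul_of_pos_left (alpha_key a b ha hab n hn) (pow_pos ha n)
  push_cast
  rw [pow_succ, pow_succ]
  nlinarith

/-- The regret-minimizing search probabilities
`α_n* = n(ū-c)^n / ((n-1)(ū-c)^n + ū^n)` (for `n ≥ 1`) are strictly
decreasing in `n` and converge to `0` as `n → ∞`. -/
theorem alphaStar_strictAnti_tendsto_zero (ubar c : ℝ) (hc : 0 < c) (hcu : c < ubar) :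
    StrictAntiOn
      (fun n : ℕ => (n : ℝ) * (ubar - c) ^ n / (((n : ℝ) - 1) * (ubar - c) ^ n + ubar ^ n))
      {n : ℕ | 1 ≤ n} ∧
    Filter.Tendsto
      (fun n : ℕ => (n : ℝ) * (ubar - c) ^ n / (((n : ℝ) - 1) * (ubar - c) ^ n + ubar ^ n))
      Filter.atTop (nhds 0) := by
  have ha : 0 < ubar - c := sub_pos.2 hcu
  have hab : ubar - c < ubar := by linarith
  generalize ubar - c = a at ha hab
  have hb : 0 < ubar := ha.trans hab
  constructor
  · intro m hm k _ hmk
    have hm' : 1 ≤ m := hm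
    induction k, (hmk : m + 1 ≤ k) using Nat.le_induction with
    | base => exact alpha_step a ubar ha hab m hm'
    | succ k hk ih =>
      exact (alpha_step a ubar ha hab k (by omega)).trans
        (ih (show 1 ≤ k by omega))
  · have hlim := tendsto_self_mul_const_pow_of_lt_one (r := a / ubar) (by positivity)
      ((div_lt_one hb).2 hab)
    refine tendsto_of_tendsto_of_tendsto_of_le_of_le' tendsto_const_nhds hlim ?_ ?_
    · filter_upwards [Filter.eventually_ge_atTop 1] with n hn
      have := alpha_den_pos a ubar ha hab n hn
      positivity
    · filter_upwards [Filter.eventually_ge_atTop 1] with n hn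
      have h : (0 : ℝ) ≤ (n : ℝ) - 1 := by
        have : (1 : ℝ) ≤ n := by exact_mod_cast hn
        linarith
      rw [div_pow, ← mul_div_assoc]
      apply div_le_div_of_nonneg_left (by positivity) (by positivity)
      have : 0 ≤ ((n : ℝ) - 1) * a ^ n := by positivity
      linarith
end

section
/- For every q ∈ [0,1] and every integer n ≥ 2: if S(q,n) ≤ S(q,n−1), then S(q,n+1) < S(q,n). Consequently the sequence n ↦ S(q,n) is quasi-concave: once it weakly decreases at some step, it strictly decreases at every later step. -/
/-- The regret-minimizing probability of opening another box when `k` boxes remain. -/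
noncomputable def alphaStar (ubar c : ℝ) (k : ℕ) : ℝ :=
  (k : ℝ) * (ubar - c) ^ k / (((k : ℝ) - 1) * (ubar - c) ^ k + ubar ^ k)

/-- Expected number of boxes opened under the regret-minimizing search rule when
the true data-generating process is i.i.d. with success probability `q`:
`S(q,n) = Σ_{i=1}^n (1-q)^{n-i} ∏_{j=i}^n α_j*`. -/
noncomputable def expSearch (ubar c q : ℝ) (n : ℕ) : ℝ :=
  ∑ i ∈ Finset.Icc 1 n, (1 - q) ^ (n - i) * ∏ j ∈ Finset.Icc i n, alphaStar ubar c j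

theorem amgm_aux (a b : ℝ) (ha : 0 < a) (hab : a < b) (k : ℕ) :
    0 < a ^ (k + 2) + ((k : ℝ) + 1) * b ^ (k + 2) - ((k : ℝ) + 2) * a * b ^ (k + 1) := by
  induction k with
  | zero => norm_num; nlinarith [mul_pos (sub_pos.2 hab) (sub_pos.2 hab)]
  | succ k ih =>
    have hb : 0 < b := ha.trans hab
    have h1 := mul_pos ha ih
    have h2 : 0 < ((k : ℝ) + 2) * b ^ (k + 1) * (b - a) ^ 2 := by
      have := sub_pos.2 hab
      positivity
    have h3 : a ^ (k + 1 + 2) + (((k + 1 : ℕ) : ℝ) + 1) * b ^ (k + 1 + 2)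
        - (((k + 1 : ℕ) : ℝ) + 2) * a * b ^ (k + 1 + 1)
        = a * (a ^ (k + 2) + ((k : ℝ) + 1) * b ^ (k + 2) - ((k : ℝ) + 2) * a * b ^ (k + 1))
          + ((k : ℝ) + 2) * b ^ (k + 1) * (b - a) ^ 2 := by
      push_cast
      ring
    rw [h3]
    exact add_pos h1 h2

theorem alphaStar_pos (ubar c : ℝ) (hc : 0 < c) (hcu : c < ubar) (k : ℕ) :
    0 < alphaStar ubar c (k + 1) := by
  have ha : 0 < ubar - c := sub_pos.2 hcu
  have hb : 0 < ubar := hc.trans hcu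
  unfold alphaStar
  push_cast
  rw [add_sub_cancel_right]
  positivity

theorem alphaStar_lt (ubar c : ℝ) (hc : 0 < c) (hcu : c < ubar) (k : ℕ) :
    alphaStar ubar c (k + 2) < alphaStar ubar c (k + 1) := by
  have ha : 0 < ubar - c := sub_pos.2 hcu
  have hb : 0 < ubar := hc.trans hcu
  have hab : ubar - c < ubar := by linarith
  unfold alphaStar
  generalize ubar - c = a at *
  push_cast
  rw [add_sub_cancel_right, show (k : ℝ) + 2 - 1 = k + 1 by ring,
    div_lt_div_iff₀ (by positivity) (by positivity)]
  have h := mul_pos (pow_pos ha (k + 1)) (amgm_aux a ubar ha hab k)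
  rw [← sub_pos]
  refine h.trans_eq ?_
  ring

theorem expSearch_succ (ubar c q : ℝ) (n : ℕ) :
    expSearch ubar c q (n + 1)
      = alphaStar ubar c (n + 1) * (1 + (1 - q) * expSearch ubar c q n) := by
  unfold expSearch
  rw [Finset.sum_Icc_succ_top (by omega), mul_add, Finset.mul_sum, Finset.mul_sum, add_comm]
  congr 1
  · simp
  · refine Finset.sum_congr rfl fun i hi => ?_
    have hi' := (Finset.mem_Icc.1 hi).2
    rw [Finset.prod_Icc_succ_top (by omega), Nat.succ_sub hi', pow_succ]
    ring

theorem expSearch_nonneg (ubar c : ℝ) (hc : 0 < c) (hcu : c < ubar)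
    (q : ℝ) (hq : q ∈ Set.Icc (0:ℝ) 1) (n : ℕ) : 0 ≤ expSearch ubar c q n := by
  have hp : 0 ≤ 1 - q := sub_nonneg.2 hq.2
  induction n with
  | zero => simp [expSearch]
  | succ n ih =>
    rw [expSearch_succ]
    have := alphaStar_pos ubar c hc hcu n
    positivity

theorem expSearch_step (ubar c : ℝ) (hc : 0 < c) (hcu : c < ubar)
    (q : ℝ) (hq : q ∈ Set.Icc (0:ℝ) 1) (n : ℕ)
    (h : expSearch ubar c q (n + 1) ≤ expSearch ubar c q n) :
    expSearch ubar c q (n + 2) < expSearch ubar c q (n + 1) := by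
  have hp : 0 ≤ 1 - q := sub_nonneg.2 hq.2
  have hS := expSearch_nonneg ubar c hc hcu q hq (n + 1)
  calc expSearch ubar c q (n + 2)
      = alphaStar ubar c (n + 2) * (1 + (1 - q) * expSearch ubar c q (n + 1)) :=
        expSearch_succ ubar c q (n + 1)
    _ < alphaStar ubar c (n + 1) * (1 + (1 - q) * expSearch ubar c q (n + 1)) :=
        mul_lt_mul_of_pos_right (alphaStar_lt ubar c hc hcu n) (by positivity)
    _ ≤ alphaStar ubar c (n + 1) * (1 + (1 - q) * expSearch ubar c q n) := by
        have := alphaStar_pos ubar c hc hcu n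
        gcongr
    _ = expSearch ubar c q (n + 1) := (expSearch_succ ubar c q n).symm

/-- For every `q ∈ [0,1]` and `n ≥ 2`: if `S(q,n) ≤ S(q,n-1)` then
`S(q,n+1) < S(q,n)`; consequently `n ↦ S(q,n)` is quasi-concave — once it
weakly decreases at some step, it strictly decreases at every later step. -/
theorem expSearch_quasiConcave (ubar c : ℝ) (hc : 0 < c) (hcu : c < ubar)
    (q : ℝ) (hq : q ∈ Set.Icc (0:ℝ) 1) :
    (∀ n : ℕ, 2 ≤ n → expSearch ubar c q n ≤ expSearch ubar c q (n - 1) →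
      expSearch ubar c q (n + 1) < expSearch ubar c q n) ∧
    (∀ m n : ℕ, 2 ≤ m → m ≤ n →
      expSearch ubar c q m ≤ expSearch ubar c q (m - 1) →
      expSearch ubar c q (n + 1) < expSearch ubar c q n) := by
  have key : ∀ n : ℕ, 2 ≤ n → expSearch ubar c q n ≤ expSearch ubar c q (n - 1) →
      expSearch ubar c q (n + 1) < expSearch ubar c q n := by
    intro n hn h
    obtain ⟨m, rfl⟩ : ∃ m, n = m + 1 := ⟨n - 1, by omega⟩
    exact expSearch_step ubar c hc hcu q hq m h
  refine ⟨key, ?_⟩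
  intro m n hm hmn h
  induction n, hmn using Nat.le_induction with
  | base => exact key m hm h
  | succ n hmn ih => exact expSearch_step ubar c hc hcu q hq n ih.le
end

section
/- Let n ≥ 1 be an integer and let q_1 ≥ q_2 ≥ … ≥ q_n ≥ 0 be real numbers with Σ_{k=1}^n q_k ≤ 1; set q̄ := (Σ_{k=1}^n q_k)/n. Then for every m ∈ {0,1,…,n}: Σ_{k=1}^m q_k(k−1)c + Σ_{k=m+1}^n q_k(ū−c+mc) + (1−Σ_{k=1}^n q_k)·mc ≤ Σ_{k=1}^m q̄(k−1)c + Σ_{k=m+1}^n q̄(ū−c+mc) + (1−n·q̄)·mc. That is, the decision-maker's expected ex-post regret from stopping after m unsuccessful openings is maximized, over all nonincreasing first-success profiles with the same total success probability, by the constant profile q_1 = … = q_n = q̄. -/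
/-- The decision-maker's expected ex-post regret from stopping after `m`
unsuccessful openings,
`Σ_{k=1}^m q_k(k-1)c + Σ_{k=m+1}^n q_k(ū-c+mc) + (1-Σ_{k=1}^n q_k)mc`,
is maximized over all nonincreasing first-success profiles with the same total
success probability by the constant profile `q_1 = … = q_n = q̄`. -/
theorem flattening_maximizes_regret (ubar c : ℝ) (hc : 0 < c) (hcu : c < ubar)
    (n : ℕ) (hn : 1 ≤ n) (q : ℕ → ℝ)
    (hmono : ∀ k l : ℕ, 1 ≤ k → k ≤ l → l ≤ n → q l ≤ q k)
    (hnonneg : ∀ k : ℕ, 1 ≤ k → k ≤ n → 0 ≤ q k)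
    (hsum : (∑ k ∈ Finset.Icc 1 n, q k) ≤ 1)
    (qbar : ℝ) (hqbar : qbar = (∑ k ∈ Finset.Icc 1 n, q k) / n) :
    ∀ m : ℕ, m ≤ n →
      (∑ k ∈ Finset.Icc 1 m, q k * ((k : ℝ) - 1) * c)
        + (∑ k ∈ Finset.Icc (m + 1) n, q k * (ubar - c + (m : ℝ) * c))
        + (1 - ∑ k ∈ Finset.Icc 1 n, q k) * ((m : ℝ) * c)
      ≤ (∑ k ∈ Finset.Icc 1 m, qbar * ((k : ℝ) - 1) * c)
        + (∑ k ∈ Finset.Icc (m + 1) n, qbar * (ubar - c + (m : ℝ) * c))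
        + (1 - (n : ℝ) * qbar) * ((m : ℝ) * c) := by
  intro m hm
  have hn0 : (0 : ℝ) < n := by exact_mod_cast hn
  obtain ⟨w, hw⟩ : ∃ w : ℕ → ℝ, w = fun k : ℕ =>
    if k ≤ m then ((k : ℝ) - 1) * c else ubar - c + (m : ℝ) * c := ⟨_, rfl⟩
  have split : ∀ p : ℕ → ℝ, ∑ k ∈ Finset.Icc 1 n, p k * w k
      = (∑ k ∈ Finset.Icc 1 m, p k * ((k : ℝ) - 1) * c)
        + (∑ k ∈ Finset.Icc (m + 1) n, p k * (ubar - c + (m : ℝ) * c)) := by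
    intro p
    have hu : Finset.Icc 1 n = Finset.Icc 1 m ∪ Finset.Icc (m + 1) n := by
      ext k
      simp only [Finset.mem_union, Finset.mem_Icc]
      omega
    have hd : Disjoint (Finset.Icc 1 m) (Finset.Icc (m + 1) n) := by
      rw [Finset.disjoint_left]
      intro k
      simp only [Finset.mem_Icc]
      omega
    rw [hu, Finset.sum_union hd]
    congr 1
    · apply Finset.sum_congr rfl
      intro k hk
      rw [Finset.mem_Icc] at hk
      simp only [hw, if_pos hk.2]
      ring
    · apply Finset.sum_congr rfl
      intro k hk
      rw [Finset.mem_Icc] at hk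
      have : ¬ k ≤ m := by omega
      simp only [hw, if_neg this]
  have hwmono : ∀ k l : ℕ, k ≤ l → w k ≤ w l := by
    intro k l hkl
    have h1 : (k : ℝ) ≤ l := by exact_mod_cast hkl
    simp only [hw]
    split_ifs with h2 h3 h3
    · nlinarith
    · have h4 : (k : ℝ) ≤ m := by exact_mod_cast h2
      nlinarith
    · omega
    · exact le_refl _
  have hanti : AntivaryOn q w (Finset.Icc 1 n : Finset ℕ) := by
    intro i hi j hj hij
    rw [Finset.mem_coe, Finset.mem_Icc] at hi hj
    have : i ≤ j := by
      by_contra h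
      exact absurd (hwmono j i (by omega)) (not_le.mpr hij)
    exact hmono i j hi.1 this hj.2
  have key := hanti.card_mul_sum_le_sum_mul_sum
  have hcard : ((Finset.Icc 1 n).card : ℝ) = n := by simp
  rw [hcard] at key
  have hnq : (n : ℝ) * qbar = ∑ k ∈ Finset.Icc 1 n, q k := by
    rw [hqbar]
    field_simp
  have e2 := split (fun _ => qbar)
  rw [← Finset.mul_sum] at e2
  rw [← split q, ← e2, hnq]
  rw [← hnq, mul_assoc] at key
  have := le_of_mul_le_mul_left key hn0
  linarith
end

section
/- Fix an integer n ≥ 1 and define R^c_n(α, P) := (1−α)·P·(ū−c) + α·(P·(n−1)/2 + (1−P)·n)·c, α_n^c := (ū−c)/(ū−c + (n+1)c/2), P_n^* := n·c/(ū + (n−1)c/2), and R_n^{c*} := n·c·(ū−c)/(ū−c + (n+1)c/2). Then: (i) R^c_n(α_n^c, P) = R_n^{c*} for every P ∈ [0,1]; (ii) R^c_n(α, P_n^*) = R_n^{c*} for every α ∈ [0,1]; and (iii) P_n^* ≤ 1 if and only if n ≤ (2ū−c)/c. In particular, for n ≤ (2ū−c)/c the pair (α_n^c, P_n^*) is a saddle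 point of R^c_n with value R_n^{c*}. -/
/-- Correlated-rewards case, small `n`: with
`R^c_n(α,P) = (1-α)P(ū-c) + α(P(n-1)/2 + (1-P)n)c`,
`α_n^c = (ū-c)/(ū-c+(n+1)c/2)`, `P_n^* = nc/(ū+(n-1)c/2)` and
`R_n^{c*} = nc(ū-c)/(ū-c+(n+1)c/2)`:
(i) `R^c_n(α_n^c, P) = R_n^{c*}` for all `P ∈ [0,1]`;
(ii) `R^c_n(α, P_n^*) = R_n^{c*}` for all `α ∈ [0,1]`;
(iii) `P_n^* ≤ 1 ↔ n ≤ (2ū-c)/c`.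
Hence for `n ≤ (2ū-c)/c` the pair `(α_n^c, P_n^*)` is a saddle point with
value `R_n^{c*}`. -/
theorem correlated_saddle_point_small_n (ubar c : ℝ) (hc : 0 < c) (hcu : c < ubar)
    (n : ℕ) (hn : 1 ≤ n)
    (Rc : ℝ → ℝ → ℝ)
    (hRc : ∀ α P, Rc α P =
      (1 - α) * P * (ubar - c) + α * (P * ((n : ℝ) - 1) / 2 + (1 - P) * (n : ℝ)) * c) :
    (∀ P ∈ Set.Icc (0:ℝ) 1,
      Rc ((ubar - c) / (ubar - c + ((n : ℝ) + 1) * c / 2)) P =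
        (n : ℝ) * c * (ubar - c) / (ubar - c + ((n : ℝ) + 1) * c / 2)) ∧
    (∀ α ∈ Set.Icc (0:ℝ) 1,
      Rc α ((n : ℝ) * c / (ubar + ((n : ℝ) - 1) * c / 2)) =
        (n : ℝ) * c * (ubar - c) / (ubar - c + ((n : ℝ) + 1) * c / 2)) ∧
    ((n : ℝ) * c / (ubar + ((n : ℝ) - 1) * c / 2) ≤ 1 ↔ (n : ℝ) ≤ (2 * ubar - c) / c) := by
  have hD : 0 < ubar - c + ((n : ℝ) + 1) * c / 2 := by
    have : 0 < ((n : ℝ) + 1) * c / 2 := by positivity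
    linarith
  have hE : ubar + ((n : ℝ) - 1) * c / 2 = ubar - c + ((n : ℝ) + 1) * c / 2 := by ring
  rw [hE]
  set D := ubar - c + ((n : ℝ) + 1) * c / 2 with hDdef
  have hu : ubar = D + c - ((n : ℝ) + 1) * c / 2 := by rw [hDdef]; ring
  have hD0 : D ≠ 0 := hD.ne'
  clear_value D
  subst hu
  refine ⟨?_, ?_, ?_⟩
  · intro P _
    rw [hRc]
    field_simp
    ring
  · intro α _
    rw [hRc]
    field_simp
    ring
  · rw [div_le_one hD, le_div_iff₀ hc]
    constructor <;> intro h <;> linarith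
end

section
/- Define recursively R̃_1 := c·(ū−c)/ū and, for integers n ≥ 2, R̃_n := n·(ū−c)·(c + R̃_{n−1}) / (n·(ū−c) + c + R̃_{n−1}); define α̃_n := n·(ū−c)/(n·(ū−c) + c + R̃_{n−1}) and P̃_n := n·(c + R̃_{n−1})/(n·(ū−c) + c + R̃_{n−1}); and define the stage regret T_n(α, P) := (1−α)·P·(ū−c) + α·(1 − P/n)·(c + R̃_{n−1}). Then every R̃_n is strictly positive, and for every n ≥ 2: (i) T_n(α̃_n, P) = R̃_n for all P ∈ [0,1]; (ii) T_n(α, P̃_n) = R̃_n for all α ∈ [0,1]; and (iii) P̃_n ≤ 1 if and only if (n−1)·(c + R̃_{n−1}) ≤ n·(ū−c). -/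
/-- Intrapersonal equilibrium with arbitrarily correlated binary rewards
(Proposition 1): with `R̃_1 = c(ū-c)/ū`,
`R̃_n = n(ū-c)(c+R̃_{n-1})/(n(ū-c)+c+R̃_{n-1})`,
`α̃_n = n(ū-c)/(n(ū-c)+c+R̃_{n-1})`, `P̃_n = n(c+R̃_{n-1})/(n(ū-c)+c+R̃_{n-1})`,
and stage regret `T_n(α,P) = (1-α)P(ū-c) + α(1-P/n)(c+R̃_{n-1})`:
every `R̃_n` (for `n ≥ 1`) is strictly positive, and for every `n ≥ 2`:
(i) `T_n(α̃_n, P) = R̃_n` for all `P ∈ [0,1]`;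
(ii) `T_n(α, P̃_n) = R̃_n` for all `α ∈ [0,1]`;
(iii) `P̃_n ≤ 1 ↔ (n-1)(c+R̃_{n-1}) ≤ n(ū-c)`. -/
theorem intrapersonal_equilibrium_correlated (ubar c : ℝ) (hc : 0 < c) (hcu : c < ubar)
    (Rt : ℕ → ℝ)
    (hR1 : Rt 1 = c * (ubar - c) / ubar)
    (hRn : ∀ n : ℕ, 2 ≤ n →
      Rt n = (n : ℝ) * (ubar - c) * (c + Rt (n - 1)) /
        ((n : ℝ) * (ubar - c) + (c + Rt (n - 1))))
    (αt Pt : ℕ → ℝ)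
    (hαt : ∀ n : ℕ, 2 ≤ n →
      αt n = (n : ℝ) * (ubar - c) / ((n : ℝ) * (ubar - c) + (c + Rt (n - 1))))
    (hPt : ∀ n : ℕ, 2 ≤ n →
      Pt n = (n : ℝ) * (c + Rt (n - 1)) / ((n : ℝ) * (ubar - c) + (c + Rt (n - 1))))
    (T : ℕ → ℝ → ℝ → ℝ)
    (hT : ∀ (n : ℕ) (α P : ℝ),
      T n α P = (1 - α) * P * (ubar - c) + α * (1 - P / (n : ℝ)) * (c + Rt (n - 1))) :
    (∀ n : ℕ, 1 ≤ n → 0 < Rt n) ∧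
    ∀ n : ℕ, 2 ≤ n →
      (∀ P ∈ Set.Icc (0:ℝ) 1, T n (αt n) P = Rt n) ∧
      (∀ α ∈ Set.Icc (0:ℝ) 1, T n α (Pt n) = Rt n) ∧
      (Pt n ≤ 1 ↔ ((n : ℝ) - 1) * (c + Rt (n - 1)) ≤ (n : ℝ) * (ubar - c)) := by
  have hd : 0 < ubar - c := sub_pos.mpr hcu
  have hpos : ∀ n : ℕ, 1 ≤ n → 0 < Rt n := by
    intro n hn
    induction n, hn using Nat.le_induction with
    | base =>
      rw [hR1]
      have : 0 < ubar := hc.trans hcu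
      positivity
    | succ k hk ih =>
      rw [hRn (k + 1) (by omega)]
      simp only [Nat.add_sub_cancel]
      positivity
  refine ⟨hpos, fun n hn => ?_⟩
  have hs : 0 < c + Rt (n - 1) := add_pos hc (hpos (n - 1) (by omega))
  have hn0 : (0 : ℝ) < n := by
    have : 0 < n := by omega
    exact_mod_cast this
  have hα := hαt n hn
  have hP := hPt n hn
  have hR := hRn n hn
  have hTn := hT n
  generalize c + Rt (n - 1) = s at *
  generalize ubar - c = d at *
  have hD : 0 < (n : ℝ) * d + s := by positivity
  refine ⟨fun P _ => ?_, fun α _ => ?_, ?_⟩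
  · rw [hTn, hα, hR]
    field_simp
    ring
  · rw [hTn, hP, hR]
    field_simp
    ring
  · rw [hP, div_le_one hD]
    constructor <;> intro h <;> linarith
end

section
/- Let 0 < c and ū > 0, and set s := √((2ū+c)·c), ρ(ū) := (c/ū²)·(ū + c + s), and α := 1/(1 + ρ(ū)). Then: (i) (1−α)·(ū−c) + (1 − √(2·α·(1−α)))·c = 2·α·c, i.e., α equates the maximal regret from searching with the regret 2αc from the no-treasure scenario; (ii) for fixed c > 0, the function ū ↦ ρ(ū) is strictly decreasing on (0,∞) and ρ(4c) = 1/2; consequently, if ū > 4c then α > 2/3. -/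
/-- The likelihood ratio `ρ(ū) = (c/ū²)(ū + c + √((2ū+c)c))` of the two-box
saddle point. -/
noncomputable def likelihoodRatio (c x : ℝ) : ℝ :=
  (c / x ^ 2) * (x + c + Real.sqrt ((2 * x + c) * c))

lemma lr_aux (c x : ℝ) (hc : 0 < c) (hx : 0 < x) :
    c < Real.sqrt ((2 * x + c) * c) ∧
    likelihoodRatio c x = 2 * c ^ 2 / (Real.sqrt ((2 * x + c) * c) - c) ^ 2 := by
  have hs : Real.sqrt ((2 * x + c) * c) ^ 2 = (2 * x + c) * c := Real.sq_sqrt (by positivity)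
  have hlt : c < Real.sqrt ((2 * x + c) * c) := by
    apply Real.lt_sqrt_of_sq_lt
    nlinarith [mul_pos hx hc]
  refine ⟨hlt, ?_⟩
  unfold likelihoodRatio
  set s := Real.sqrt ((2 * x + c) * c)
  have h1 : s - c ≠ 0 := by linarith
  have h2 : x = (s ^ 2 - c ^ 2) / (2 * c) := by
    field_simp
    linarith
  have h3 : s + c ≠ 0 := by linarith
  have h4 : s ^ 2 - c ^ 2 ≠ 0 := by
    have : s ^ 2 - c ^ 2 = (s - c) * (s + c) := by ring
    rw [this]; exact mul_ne_zero h1 h3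
  have h5 : x + c + s = (s + c) ^ 2 / (2 * c) := by
    rw [h2]; field_simp; ring
  have h6 : x = (s - c) * (s + c) / (2 * c) := by rw [h2]; ring
  rw [h5, h6]
  field_simp
  try ring

lemma lr_anti (c : ℝ) (hc : 0 < c) : StrictAntiOn (likelihoodRatio c) (Set.Ioi 0) := by
  intro x hx y hy hxy
  have hx' : 0 < x := hx
  have hy' : 0 < y := hy
  obtain ⟨h1, e1⟩ := lr_aux c x hc hx'
  obtain ⟨h2, e2⟩ := lr_aux c y hc hy'
  have hlt : Real.sqrt ((2 * x + c) * c) < Real.sqrt ((2 * y + c) * c) := by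
    apply Real.sqrt_lt_sqrt (by positivity)
    nlinarith
  rw [e1, e2]
  apply div_lt_div_of_pos_left (by positivity)
  · have : 0 < Real.sqrt ((2 * x + c) * c) - c := by linarith
    positivity
  · apply pow_lt_pow_left₀ _ _ (by norm_num) <;> linarith

lemma lr_four (c : ℝ) (hc : 0 < c) : likelihoodRatio c (4 * c) = 1 / 2 := by
  unfold likelihoodRatio
  have : Real.sqrt ((2 * (4 * c) + c) * c) = 3 * c := by
    rw [show (2 * (4 * c) + c) * c = (3 * c) ^ 2 by ring]
    exact Real.sqrt_sq (by positivity)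
  rw [this]
  field_simp
  norm_num

/-- With `α = 1/(1 + ρ(ū))`:
(i) `(1-α)(ū-c) + (1-√(2α(1-α)))c = 2αc`, i.e. `α` equates the maximal regret
from searching with the regret `2αc` of the no-treasure scenario;
(ii) `ρ` is strictly decreasing on `(0,∞)` and `ρ(4c) = 1/2`; consequently if
`ū > 4c` then `α > 2/3`. -/
theorem two_box_initial_search_probability (c ubar : ℝ) (hc : 0 < c) (hu : 0 < ubar) :
    ((1 - 1 / (1 + likelihoodRatio c ubar)) * (ubar - c)
        + (1 - Real.sqrt (2 * (1 / (1 + likelihoodRatio c ubar))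
            * (1 - 1 / (1 + likelihoodRatio c ubar)))) * c
      = 2 * (1 / (1 + likelihoodRatio c ubar)) * c) ∧
    StrictAntiOn (likelihoodRatio c) (Set.Ioi 0) ∧
    likelihoodRatio c (4 * c) = 1 / 2 ∧
    (4 * c < ubar → 2 / 3 < 1 / (1 + likelihoodRatio c ubar)) := by
  refine ⟨?_, lr_anti c hc, lr_four c hc, ?_⟩
  · obtain ⟨h1, e1⟩ := lr_aux c ubar hc hu
    have hs : Real.sqrt ((2 * ubar + c) * c) ^ 2 = (2 * ubar + c) * c :=
      Real.sq_sqrt (by positivity)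
    rw [e1]
    set s := Real.sqrt ((2 * ubar + c) * c)
    obtain ⟨d, hd⟩ : ∃ d, d = s - c := ⟨_, rfl⟩
    have hd0 : 0 < d := by linarith
    have hu2 : ubar = d * (d + 2 * c) / (2 * c) := by
      have : s = d + c := by linarith
      rw [this] at hs
      field_simp
      linarith
    rw [← hd]
    have hq : Real.sqrt (2 * (1 / (1 + 2 * c ^ 2 / d ^ 2))
        * (1 - 1 / (1 + 2 * c ^ 2 / d ^ 2))) = 2 * c * d / (d ^ 2 + 2 * c ^ 2) := by
      have h0 : d ^ 2 + 2 * c ^ 2 ≠ 0 := by positivity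
      rw [show 2 * (1 / (1 + 2 * c ^ 2 / d ^ 2)) * (1 - 1 / (1 + 2 * c ^ 2 / d ^ 2))
        = (2 * c * d / (d ^ 2 + 2 * c ^ 2)) ^ 2 by field_simp; ring]
      exact Real.sqrt_sq (by positivity)
    have h0 : d ^ 2 + 2 * c ^ 2 ≠ 0 := by positivity
    rw [hq, hu2]
    field_simp
    ring
  · intro h
    have h1 := lr_anti c hc (show (4 * c) ∈ Set.Ioi 0 from by simpa using hc) hu h
    rw [lr_four c hc] at h1
    have h2 : 0 < likelihoodRatio c ubar := by
      unfold likelihoodRatio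
      positivity
    rw [lt_div_iff₀ (by linarith)]
    linarith
end

section
/- Let N be a finite set of positive integers and, for each i ∈ N, let ū_i > c_i > 0 be reals; set p̂_i := c_i/ū_i ∈ (0,1) and Δ_i := ū_i − c_i, and assume Δ_i ≤ Δ_k whenever i < k in N. For k and a finite set M define ψ(k, M) := ∏_{j ∈ M, j > k} (1 − p̂_j), and define R*(M) := Σ_{k ∈ M} p̂_k · Δ_k · ψ(k, M). Then for every i ∈ N: p̂_i · Σ_{k ∈ N, k > i} p̂_k · ψ(k, N) · (Δ_k − Δ_i) + (1 − p̂_i) · (c_i + R*(N \ {i})) = R*(N). That is, at the beliefs p̂ = (p̂_i), the regret from opening any box i ∈ N first (and continuing optimally) equals the regret R*(N) from opting out, so the decision-maker is indifferent among all search strategies. -/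
/-- `ψ(k, M) = ∏_{j ∈ M, j > k} (1 - p̂_j)`: under beliefs `p̂`, the probability
that all boxes in `M` with index above `k` fail. -/
noncomputable def psiProd (phat : ℕ → ℝ) (k : ℕ) (M : Finset ℕ) : ℝ :=
  ∏ j ∈ M.filter (fun j => k < j), (1 - phat j)

/-- `R*(M) = Σ_{k ∈ M} p̂_k Δ_k ψ(k, M)`: the saddle-point regret of the
heterogeneous problem on the menu `M`. -/
noncomputable def hetRegret (phat Δ : ℕ → ℝ) (M : Finset ℕ) : ℝ :=
  ∑ k ∈ M, phat k * Δ k * psiProd phat k M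

theorem psi_telescope (p : ℕ → ℝ) (M : Finset ℕ) :
    ∑ k ∈ M, p k * ∏ j ∈ M.filter (fun j => k < j), (1 - p j) = 1 - ∏ j ∈ M, (1 - p j) := by
  induction M using Finset.induction_on_min with
  | empty => simp
  | insert a s ha ih =>
    have hn : a ∉ s := fun h => lt_irrefl _ (ha a h)
    rw [Finset.sum_insert hn, Finset.prod_insert hn]
    have h1 : (insert a s).filter (fun j => a < j) = s := by
      ext x
      simp only [Finset.mem_filter, Finset.mem_insert]
      constructor
      · rintro ⟨h | h, h2⟩
        · omega
        · exact h
      · intro h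
        exact ⟨Or.inr h, ha x h⟩
    have h2 : ∀ k ∈ s, p k * ∏ j ∈ (insert a s).filter (fun j => k < j), (1 - p j)
        = p k * ∏ j ∈ s.filter (fun j => k < j), (1 - p j) := by
      intro k hk
      rw [Finset.filter_insert, if_neg (not_lt.mpr (ha k hk).le)]
    rw [h1, Finset.sum_congr rfl h2, ih]
    ring

theorem indiff_general (N : Finset ℕ) (p D : ℕ → ℝ) (c : ℝ) (i : ℕ) (hi : i ∈ N)
    (hpc : (1 - p i) * c = p i * D i) :
    p i * (∑ k ∈ N.filter (fun k => i < k), p k * psiProd p k N * (D k - D i))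
      + (1 - p i) * (c + hetRegret p D (N \ {i})) = hetRegret p D N := by
  have hS : ∑ k ∈ N.filter (fun k => i < k), p k * psiProd p k N = 1 - psiProd p i N := by
    unfold psiProd
    rw [← psi_telescope]
    refine Finset.sum_congr rfl fun k hk => ?_
    rw [Finset.filter_filter]
    congr 2
    ext x
    simp only [Finset.mem_filter] at hk ⊢
    constructor
    · rintro ⟨a, b⟩
      exact ⟨a, hk.2.trans b, b⟩
    · rintro ⟨a, _, b⟩
      exact ⟨a, b⟩
  have hR : hetRegret p D N = p i * D i * psiProd p i N
      + ∑ k ∈ N \ {i}, p k * D k * psiProd p k N := by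
    unfold hetRegret
    rw [← Finset.erase_eq, Finset.add_sum_erase N (fun k => p k * D k * psiProd p k N) hi]
  have hF : N.filter (fun k => i < k) = (N \ {i}).filter (fun k => i < k) := by
    ext x
    simp only [Finset.mem_filter, Finset.mem_sdiff, Finset.mem_singleton]
    constructor
    · rintro ⟨a, b⟩
      exact ⟨⟨a, by omega⟩, b⟩
    · rintro ⟨⟨a, _⟩, b⟩
      exact ⟨a, b⟩
  have hT : p i * (∑ k ∈ N.filter (fun k => i < k), p k * D k * psiProd p k N)
      + (1 - p i) * hetRegret p D (N \ {i}) = ∑ k ∈ N \ {i}, p k * D k * psiProd p k N := by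
    rw [hF, Finset.sum_filter]
    unfold hetRegret
    rw [Finset.mul_sum, Finset.mul_sum, ← Finset.sum_add_distrib]
    refine Finset.sum_congr rfl fun k hk => ?_
    simp only [Finset.mem_sdiff, Finset.mem_singleton] at hk
    have he : (N \ {i}).filter (fun j => k < j) = (N.filter (fun j => k < j)).erase i := by
      ext x
      simp only [Finset.mem_filter, Finset.mem_sdiff, Finset.mem_singleton, Finset.mem_erase]
      tauto
    by_cases h : i < k
    · have : psiProd p k (N \ {i}) = psiProd p k N := by
        unfold psiProd
        rw [he, Finset.erase_eq_of_notMem]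
        simp only [Finset.mem_filter]
        omega
      rw [if_pos h, this]
      ring
    · have : (1 - p i) * psiProd p k (N \ {i}) = psiProd p k N := by
        unfold psiProd
        rw [he]
        refine Finset.mul_prod_erase _ (fun j => 1 - p j) ?_
        simp only [Finset.mem_filter]
        exact ⟨hi, by omega⟩
      rw [if_neg h, ← this]
      ring
  have hsplit : ∑ k ∈ N.filter (fun k => i < k), p k * psiProd p k N * (D k - D i)
      = (∑ k ∈ N.filter (fun k => i < k), p k * D k * psiProd p k N)
        - D i * (1 - psiProd p i N) := by
    rw [← hS, Finset.mul_sum, ← Finset.sum_sub_distrib]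
    exact Finset.sum_congr rfl fun k _ => by ring
  rw [hsplit, hR, ← hT]
  linear_combination hpc

/-- Heterogeneous Pandora problem (Theorem 6 indifference condition): with
`p̂_i = c_i/ū_i`, `Δ_i = ū_i - c_i` nondecreasing in the index, for every
`i ∈ N`:
`p̂_i Σ_{k ∈ N, k > i} p̂_k ψ(k,N)(Δ_k - Δ_i) + (1-p̂_i)(c_i + R*(N\{i})) = R*(N)`,
so at the beliefs `p̂` the regret of opening any box `i` first equals the
regret `R*(N)` of opting out. -/
theorem heterogeneous_indifference (N : Finset ℕ) (ubar cbar : ℕ → ℝ)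
    (hidx : ∀ i ∈ N, 0 < i)
    (hc : ∀ i ∈ N, 0 < cbar i)
    (hcu : ∀ i ∈ N, cbar i < ubar i)
    (hord : ∀ i ∈ N, ∀ k ∈ N, i < k → ubar i - cbar i ≤ ubar k - cbar k) :
    ∀ i ∈ N,
      (cbar i / ubar i) *
          (∑ k ∈ N.filter (fun k => i < k),
            (cbar k / ubar k) * psiProd (fun j => cbar j / ubar j) k N *
              ((ubar k - cbar k) - (ubar i - cbar i)))
        + (1 - cbar i / ubar i) *
          (cbar i +
            hetRegret (fun j => cbar j / ubar j) (fun j => ubar j - cbar j) (N \ {i}))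
      = hetRegret (fun j => cbar j / ubar j) (fun j => ubar j - cbar j) N := by
  intro i hi
  have hu : ubar i ≠ 0 := ((hc i hi).trans (hcu i hi)).ne'
  refine indiff_general N (fun j => cbar j / ubar j) (fun j => ubar j - cbar j) (cbar i) i hi ?_
  field_simp
end

section
/- Let N be a finite set of positive integers and, for each j ∈ N, let p̂_j ∈ (0,1); let Δ : N ∪ {0} → ℝ be nondecreasing with Δ_0 := 0, and define ψ(k, M) := ∏_{j ∈ M, j > k} (1 − p̂_j). Then for every i ∈ N and every ℓ ∈ (N ∪ {0}) with ℓ < i: ψ(i, N) · (Δ_i − Δ_ℓ) ≥ Σ_{k ∈ N, ℓ < k < i} p̂_k · ψ(k, N \ {i}) · (Δ_k − Δ_ℓ), with equality if Δ_i = Δ_ℓ and strict inequality if Δ_i > Δ_ℓ. (Equivalently, the coefficients B_{ℓi} in the first-order conditions of the heterogeneous saddle point are nonnegative, using the identity Σ_{k ∈ N, ℓ<k<i} p̂_k ∏_{j ∈ N, k<j<i}(1−p̂_j) = 1 − ∏_{j ∈ N, ℓ<j<i}(1−p̂_j) < 1.) -/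
theorem one_sub_ordered_dual (s : Finset ℕ) (f : ℕ → ℝ) :
    ∑ k ∈ s, f k * ∏ j ∈ s.filter (fun j => k < j), (1 - f j) = 1 - ∏ j ∈ s, (1 - f j) := by
  induction s using Finset.induction_on_min with
  | empty => simp
  | insert a s ha ih =>
    have hn : a ∉ s := fun h => lt_irrefl _ (ha a h)
    rw [Finset.sum_insert hn, Finset.prod_insert hn]
    have h1 : (insert a s).filter (fun j => a < j) = s := by
      ext j
      simp only [Finset.mem_filter, Finset.mem_insert]
      constructor
      · rintro ⟨h | h, h2⟩
        · omega
        · exact h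
      · intro h
        exact ⟨Or.inr h, ha j h⟩
    have h2 : ∑ k ∈ s, f k * ∏ j ∈ (insert a s).filter (fun j => k < j), (1 - f j)
        = ∑ k ∈ s, f k * ∏ j ∈ s.filter (fun j => k < j), (1 - f j) := by
      refine Finset.sum_congr rfl fun k hk => ?_
      rw [Finset.filter_insert, if_neg (by have := ha k hk; omega)]
    rw [h1, h2, ih]
    ring

/-- Nonnegativity of the coefficients `B_{ℓi}` (Theorem 6): with
`p̂_j ∈ (0,1)` and `Δ` nondecreasing on `N ∪ {0}` with `Δ_0 = 0`, for every
`i ∈ N` and `ℓ ∈ N ∪ {0}` with `ℓ < i`: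
`Σ_{k ∈ N, ℓ<k<i} p̂_k ψ(k, N\{i})(Δ_k - Δ_ℓ) ≤ ψ(i,N)(Δ_i - Δ_ℓ)`,
with equality if `Δ_i = Δ_ℓ` and strict inequality if `Δ_i > Δ_ℓ`; moreover
`Σ_{k ∈ N, ℓ<k<i} p̂_k ∏_{j ∈ N, k<j<i}(1-p̂_j) = 1 - ∏_{j ∈ N, ℓ<j<i}(1-p̂_j) < 1`. -/
theorem het_coefficients_nonneg (N : Finset ℕ) (phat Δ : ℕ → ℝ)
    (hidx : ∀ j ∈ N, 0 < j)
    (hp : ∀ j ∈ N, phat j ∈ Set.Ioo (0:ℝ) 1)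
    (hΔ0 : Δ 0 = 0)
    (hmono : ∀ i ∈ insert 0 N, ∀ k ∈ insert 0 N, i ≤ k → Δ i ≤ Δ k) :
    ∀ i ∈ N, ∀ l ∈ insert 0 N, l < i →
      ((∑ k ∈ N.filter (fun k => l < k ∧ k < i),
          phat k * psiProd phat k (N \ {i}) * (Δ k - Δ l))
        ≤ psiProd phat i N * (Δ i - Δ l)) ∧
      (Δ i = Δ l →
        psiProd phat i N * (Δ i - Δ l) =
          ∑ k ∈ N.filter (fun k => l < k ∧ k < i),
            phat k * psiProd phat k (N \ {i}) * (Δ k - Δ l)) ∧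
      (Δ l < Δ i →
        (∑ k ∈ N.filter (fun k => l < k ∧ k < i),
            phat k * psiProd phat k (N \ {i}) * (Δ k - Δ l))
          < psiProd phat i N * (Δ i - Δ l)) ∧
      ((∑ k ∈ N.filter (fun k => l < k ∧ k < i),
          phat k * ∏ j ∈ N.filter (fun j => k < j ∧ j < i), (1 - phat j))
        = 1 - ∏ j ∈ N.filter (fun j => l < j ∧ j < i), (1 - phat j)) ∧
      ((1 : ℝ) - ∏ j ∈ N.filter (fun j => l < j ∧ j < i), (1 - phat j)) < 1 := by
  intro i hi l hl hli
  have hpos : ∀ M : Finset ℕ, M ⊆ N → 0 < ∏ j ∈ M, (1 - phat j) := fun M hM =>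
    Finset.prod_pos fun j hj => by linarith [(hp j (hM hj)).2]
  have hid : (∑ k ∈ N.filter (fun k => l < k ∧ k < i),
          phat k * ∏ j ∈ N.filter (fun j => k < j ∧ j < i), (1 - phat j))
        = 1 - ∏ j ∈ N.filter (fun j => l < j ∧ j < i), (1 - phat j) := by
    rw [← one_sub_ordered_dual]
    refine Finset.sum_congr rfl fun k hk => ?_
    rw [Finset.filter_filter]
    congr 2
    ext j
    simp only [Finset.mem_filter] at hk ⊢
    constructor
    · rintro ⟨h1, h2, h3⟩
      exact ⟨h1, ⟨by omega, h3⟩, h2⟩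
    · rintro ⟨h1, ⟨h2, h3⟩, h4⟩
      exact ⟨h1, h4, h3⟩
  have hP := hpos (N.filter (fun j => l < j ∧ j < i)) (Finset.filter_subset _ _)
  have hψ : 0 < psiProd phat i N := hpos _ (Finset.filter_subset _ _)
  have hsplit : ∀ k, k < i → psiProd phat k (N \ {i})
      = (∏ j ∈ N.filter (fun j => k < j ∧ j < i), (1 - phat j)) * psiProd phat i N := by
    intro k hk
    unfold psiProd
    rw [← Finset.prod_union]
    · congr 1
      ext j
      simp only [Finset.mem_filter, Finset.mem_union, Finset.mem_sdiff, Finset.mem_singleton]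
      by_cases hj : j ∈ N <;> simp only [hj, true_and, false_and, or_self]
      omega
    · rw [Finset.disjoint_left]
      intro j h1 h2
      simp only [Finset.mem_filter] at h1 h2
      omega
  have hΔil : Δ l ≤ Δ i := hmono l hl i (Finset.mem_insert_of_mem hi) hli.le
  have hsum : (∑ k ∈ N.filter (fun k => l < k ∧ k < i),
          phat k * psiProd phat k (N \ {i}) * (Δ k - Δ l))
        ≤ (1 - ∏ j ∈ N.filter (fun j => l < j ∧ j < i), (1 - phat j))
          * (psiProd phat i N * (Δ i - Δ l)) := by
    rw [← hid, Finset.sum_mul]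
    refine Finset.sum_le_sum fun k hk => ?_
    simp only [Finset.mem_filter] at hk
    rw [hsplit k hk.2.2]
    have h1 := hpos (N.filter (fun j => k < j ∧ j < i)) (Finset.filter_subset _ _)
    have h2 := (hp k hk.1).1
    have h3 : Δ k ≤ Δ i := hmono k (Finset.mem_insert_of_mem hk.1) i
      (Finset.mem_insert_of_mem hi) hk.2.2.le
    have h4 := mul_le_mul_of_nonneg_left (sub_le_sub_right h3 (Δ l))
      (mul_pos (mul_pos h2 h1) hψ).le
    linarith
  have hnn : 0 ≤ psiProd phat i N * (Δ i - Δ l) := mul_nonneg hψ.le (by linarith)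
  refine ⟨?_, ?_, ?_, hid, by linarith⟩
  · nlinarith [mul_nonneg hP.le hnn]
  · intro h
    rw [h, sub_self, mul_zero]
    symm
    refine Finset.sum_eq_zero fun k hk => ?_
    simp only [Finset.mem_filter] at hk
    have hk' := Finset.mem_insert_of_mem (b := 0) hk.1
    have h3 : Δ k ≤ Δ i := hmono k hk' i (Finset.mem_insert_of_mem hi) hk.2.2.le
    have h4 : Δ l ≤ Δ k := hmono l hl k hk' hk.2.1.le
    rw [show Δ k = Δ l by linarith, sub_self, mul_zero]
  · intro h
    have h5 := mul_pos hP (mul_pos hψ (sub_pos.2 h))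
    linarith
end
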